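/- Let 1/2 < δ < 1, set ρ := 2 - 1/δ, and let c ∈ ℝ. Let k, N : ℕ → ℕ satisfy k(d) < d < N(d), d/N(d) → δ, k(d)/d → ρ, and (N(d) - 2d + k(d))/√d → c as d → ∞. Then Q_{d,k(d)}(N(d)) → Φ(-c/√(2(1-ρ))) as d → ∞, and this limit lies in the open interval (0,1). -/

import Mathlib

open Filter Finset Real Topology

/-- `Q d k N = 2^k · (Σ_{i=0}^{d-k-1} C(N-k-1, i)) / (Σ_{i=0}^{d-1} C(N-1, i))`,
the normalized expected `k`-face number `E f_k(C_N)/C(N,k)` of the Cover–Efron cone. -/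
noncomputable def Q (d k N : ℕ) : ℝ :=
  2 ^ k * (∑ i ∈ Finset.range (d - k), ((N - k - 1).choose i : ℝ)) /
    (∑ i ∈ Finset.range d, ((N - 1).choose i : ℝ))

/-- The cumulative distribution function `Φ` of the standard normal distribution. -/
noncomputable def stdNormalCDF (x : ℝ) : ℝ :=
  (Real.sqrt (2 * Real.pi))⁻¹ * ∫ t in Set.Iic x, Real.exp (-t ^ 2 / 2)

/-!
`Q d k N` is the ratio of `P(S < d - k)` to `P(T < d)` for `S` and `T` fair binomial with
`N - k - 1` and `N - 1` trials. With `s = √(2(d - k))` and `e = N - 2d + k`, the number of trials of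
`S` is `s ^ 2 + e - 1` and the standardized threshold of `S` is `(1 - e) / √(s ^ 2 + e - 1)`, which
tends to `-lim e / s`; the standardized threshold of `T` exceeds a multiple of `k / √d` up to a
constant, so it tends to `+∞` and the denominator tends to `1`. By the de Moivre–Laplace theorem
both distribution functions converge pointwise to `Φ`; as they are monotone and `Φ` is continuous,
the convergence persists along converging thresholds.
-/

open MeasureTheory ProbabilityTheory

section Monotone

variable {ι α β : Type*} {l : Filter ι} [LinearOrder β] [TopologicalSpace β] [OrderTopology β]
  {F : ι → α → β} {G : α → β} {x : ι → α}

lemma tendsto_apply_of_monotone [LinearOrder α] [TopologicalSpace α] [OrderTopology α]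
    [DenselyOrdered α] [NoMinOrder α] [NoMaxOrder α] {a : α}
    (hF : ∀ᶠ i in l, Monotone (F i)) (hFG : ∀ y, Tendsto (F · y) l (𝓝 (G y)))
    (hG : ContinuousAt G a) (hx : Tendsto x l (𝓝 a)) :
    Tendsto (fun i ↦ F i (x i)) l (𝓝 (G a)) := by
  refine tendsto_order.2 ⟨fun b hb ↦ ?_, fun b hb ↦ ?_⟩
  · obtain ⟨y, hby, hya⟩ := (((hG.eventually_const_lt hb).filter_mono nhdsWithin_le_nhds).and
      (self_mem_nhdsWithin : Set.Iio a ∈ 𝓝[<] a)).exists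
    filter_upwards [hF, (hFG y).eventually_const_lt hby, hx.eventually_const_lt hya]
      with i hmono hlt hyx using hlt.trans_le (hmono hyx.le)
  · obtain ⟨y, hyb, hay⟩ := (((hG.eventually_lt_const hb).filter_mono nhdsWithin_le_nhds).and
      (self_mem_nhdsWithin : Set.Ioi a ∈ 𝓝[>] a)).exists
    filter_upwards [hF, (hFG y).eventually_lt_const hyb, hx.eventually_lt_const hay]
      with i hmono hlt hxy using (hmono hxy.le).trans_lt hlt

lemma tendsto_apply_atTop_of_monotone [Preorder α] [IsDirectedOrder α] [Nonempty α] {b : β}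
    (hF : ∀ᶠ i in l, Monotone (F i)) (hFb : ∀ᶠ i in l, ∀ y, F i y ≤ b)
    (hFG : ∀ y, Tendsto (F · y) l (𝓝 (G y))) (hG : Tendsto G atTop (𝓝 b))
    (hx : Tendsto x l atTop) : Tendsto (fun i ↦ F i (x i)) l (𝓝 b) := by
  refine tendsto_order.2 ⟨fun c hc ↦ ?_, fun c hc ↦ ?_⟩
  · obtain ⟨y, hy⟩ := (hG.eventually_const_lt hc).exists
    filter_upwards [hF, (hFG y).eventually_const_lt hy, hx.eventually_ge_atTop y]
      with i hmono hlt hyx using hlt.trans_le (hmono hyx)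
  · filter_upwards [hFb] with i hle using (hle _).trans_lt hc

end Monotone

section StdNormalCDF

lemma stdNormalCDF_eq_cdf : stdNormalCDF = cdf (gaussianReal 0 1) := by
  ext y
  rw [cdf_eq_real, measureReal_def, gaussianReal_apply_eq_integral 0 one_ne_zero,
    ENNReal.toReal_ofReal
      (setIntegral_nonneg measurableSet_Iic fun t _ ↦ gaussianPDFReal_nonneg _ _ _),
    stdNormalCDF, ← integral_const_mul]
  simp [gaussianPDFReal]

lemma gaussianReal_real_Iio (y : ℝ) : (gaussianReal 0 1).real (Set.Iio y) = stdNormalCDF y := by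
  have := nullSingletonClass_gaussianReal (μ := 0) (one_ne_zero (α := NNReal))
  rw [stdNormalCDF_eq_cdf, cdf_eq_real, measureReal_congr Iio_ae_eq_Iic]

lemma continuous_stdNormalCDF : Continuous stdNormalCDF := by
  have hint : Integrable (fun t : ℝ ↦ exp (-t ^ 2 / 2)) := by
    simpa [neg_div, div_eq_inv_mul] using integrable_exp_neg_mul_sq (b := 2⁻¹) (by norm_num)
  refine continuous_const.mul (continuous_iff_continuousAt.2 fun y ↦ ?_)
  exact hint.integrableOn.continuousOn_Iic_primitive_Iic.continuousAt (Iic_mem_nhds (lt_add_one y))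

lemma tendsto_stdNormalCDF_atTop : Tendsto stdNormalCDF atTop (𝓝 1) :=
  stdNormalCDF_eq_cdf ▸ tendsto_cdf_atTop _

lemma stdNormalCDF_mem_Ioo (y : ℝ) : stdNormalCDF y ∈ Set.Ioo (0 : ℝ) 1 := by
  have hpos {s : Set ℝ} (hs : volume s ≠ 0) : 0 < (gaussianReal 0 1).real s :=
    ENNReal.toReal_pos (fun h ↦ hs (gaussianReal_absolutelyContinuous' 0 one_ne_zero h))
      (measure_ne_top _ _)
  have hIic : 0 < (gaussianReal 0 1).real (Set.Iic y) := hpos (by simp)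
  have hIoi : 0 < (gaussianReal 0 1).real (Set.Iic y)ᶜ := hpos (by simp)
  rw [probReal_compl_eq_one_sub measurableSet_Iic, sub_pos] at hIoi
  rw [stdNormalCDF_eq_cdf, cdf_eq_real]
  exact ⟨hIic, hIoi⟩

end StdNormalCDF

section DeMoivreLaplace

lemma binomial_real_Iio (n m : ℕ) (p : unitInterval) :
    Bin(n, p).real (Set.Iio m) =
      ∑ i ∈ range m, n.choose i * (p : ℝ) ^ i * (1 - p) ^ (n - i) := by
  rw [← Finset.coe_Iio, ← sum_measureReal_singleton, Nat.Iio_eq_range]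
  simp only [binomial_real_singleton]

/-- The law of `(S - np) / √(np(1 - p))` for a binomial random variable `S` with parameters `n`
and `p`, i.e. of `S` rescaled to mean `0` and variance `1`. -/
noncomputable def standardizedBinomial (n : ℕ) (p : unitInterval) : ProbabilityMeasure ℝ :=
  ⟨Bin(n, p).map fun i : ℕ ↦ (i - n * p : ℝ) / √(n * (p * (1 - p))),
    Measure.isProbabilityMeasure_map .of_discrete⟩

/-- The law of a Bernoulli random variable with parameter `p` rescaled to mean `0` and
variance `1`; `standardizedBinomial n p` is the law of the sum of `n` independent copies,
divided by `√n`. -/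
noncomputable abbrev standardizedBernoulli (p : unitInterval) : Measure ℝ :=
  Ber((1 - p : ℝ) / √(p * (1 - p)), -p / √(p * (1 - p)), p)

lemma charFun_standardizedBinomial (n : ℕ) (p : unitInterval) (t : ℝ) :
    charFun (standardizedBinomial n p : Measure ℝ) t =
      charFun (standardizedBernoulli p) ((√n)⁻¹ * t) ^ n := by
  rw [standardizedBinomial, ProbabilityMeasure.coe_mk, charFun_apply_real, charFun_apply_real,
    integral_map .of_discrete (by fun_prop), integral_binomial, integral_bernoulliMeasure, add_pow,
    ← Nat.range_succ_eq_Iic]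
  refine sum_congr rfl fun i hi ↦ ?_
  have hexp (a b σ : ℂ) : Complex.exp (t * ((i - n * a) / (b * σ)) * Complex.I) =
      Complex.exp (b⁻¹ * t * ((1 - a) / σ) * Complex.I) ^ i *
        Complex.exp (b⁻¹ * t * (-a / σ) * Complex.I) ^ (n - i) := by
    rw [← Complex.exp_nat_mul, ← Complex.exp_nat_mul, ← Complex.exp_add,
      Nat.cast_sub (mem_range_succ_iff.1 hi)]
    ring_nf
  rw [Real.sqrt_mul (Nat.cast_nonneg n)]
  simp only [Complex.real_smul, mul_pow]
  push_cast
  rw [hexp]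
  ring

lemma integral_standardizedBernoulli (p : unitInterval) :
    ∫ x, x ∂standardizedBernoulli p = 0 := by
  rw [integral_bernoulliMeasure]
  simp only [smul_eq_mul]
  ring

variable {p : unitInterval} (hp0 : 0 < p) (hp1 : p < 1)

include hp0 hp1

lemma mul_one_sub_pos : 0 < (p * (1 - p) : ℝ) :=
  mul_pos (unitInterval.coe_pos.2 hp0) (sub_pos.2 (unitInterval.coe_lt_one.2 hp1))

lemma integral_sq_standardizedBernoulli : ∫ x, x ^ 2 ∂standardizedBernoulli p = 1 := by
  rw [integral_bernoulliMeasure, div_pow, div_pow, Real.sq_sqrt (mul_one_sub_pos hp0 hp1).le]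
  calc _ = (p * (1 - p) : ℝ) / (p * (1 - p)) := by simp only [smul_eq_mul]; ring
    _ = 1 := div_self (mul_one_sub_pos hp0 hp1).ne'

lemma tendsto_standardizedBinomial :
    Tendsto (standardizedBinomial · p) atTop (𝓝 ⟨gaussianReal 0 1, inferInstance⟩) := by
  refine ProbabilityMeasure.tendsto_iff_tendsto_charFun.2 fun t ↦ ?_
  have h := tendsto_charFun_inv_sqrt_mul_pow (P := standardizedBernoulli p) (X := id)
    aemeasurable_id (integral_standardizedBernoulli p)
    (integral_sq_standardizedBernoulli hp0 hp1) t
  rw [Measure.map_id] at h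
  simpa [charFun_standardizedBinomial, charFun_gaussianReal, neg_div] using h

lemma tendsto_standardizedBinomial_real_Iio (y : ℝ) :
    Tendsto (fun n ↦ (standardizedBinomial n p : Measure ℝ).real (Set.Iio y)) atTop
      (𝓝 (stdNormalCDF y)) := by
  have := nullSingletonClass_gaussianReal (μ := 0) (one_ne_zero (α := NNReal))
  rw [← gaussianReal_real_Iio]
  refine (ENNReal.tendsto_toReal (measure_ne_top _ _)).comp <|
    ProbabilityMeasure.tendsto_measure_of_null_frontier_of_tendsto'
      (tendsto_standardizedBinomial hp0 hp1) ?_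
  simp

lemma standardizedBinomial_real_Iio {n : ℕ} (hn : n ≠ 0) (m : ℕ) :
    (standardizedBinomial n p : Measure ℝ).real
        (Set.Iio ((m - n * p) / √(n * (p * (1 - p))))) = Bin(n, p).real (Set.Iio m) := by
  have hσ : 0 < √(n * (p * (1 - p : ℝ))) := by
    have := mul_one_sub_pos hp0 hp1
    positivity
  rw [standardizedBinomial, ProbabilityMeasure.coe_mk,
    map_measureReal_apply .of_discrete measurableSet_Iio]
  congr 1
  ext i
  rw [Set.mem_preimage, Set.mem_Iio, div_lt_div_iff_of_pos_right hσ, sub_lt_sub_iff_right,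
    Nat.cast_lt, Set.mem_Iio]

variable {ι : Type*} {l : Filter ι} {n m : ι → ℕ}

lemma tendsto_binomial_real_Iio {y : ℝ} (hn : Tendsto n l atTop)
    (hm : Tendsto (fun i ↦ (m i - n i * p : ℝ) / √(n i * (p * (1 - p)))) l (𝓝 y)) :
    Tendsto (fun i ↦ Bin(n i, p).real (Set.Iio (m i))) l (𝓝 (stdNormalCDF y)) := by
  refine (tendsto_apply_of_monotone
    (F := fun i z ↦ (standardizedBinomial (n i) p : Measure ℝ).real (Set.Iio z))
    (.of_forall fun i z w hzw ↦ measureReal_mono (Set.Iio_subset_Iio hzw))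
    (fun z ↦ (tendsto_standardizedBinomial_real_Iio hp0 hp1 z).comp hn)
    continuous_stdNormalCDF.continuousAt hm).congr' ?_
  filter_upwards [hn.eventually_ne_atTop 0] with i hi
    using standardizedBinomial_real_Iio hp0 hp1 hi (m i)

lemma tendsto_binomial_real_Iio_one (hn : Tendsto n l atTop)
    (hm : Tendsto (fun i ↦ (m i - n i * p : ℝ) / √(n i * (p * (1 - p)))) l atTop) :
    Tendsto (fun i ↦ Bin(n i, p).real (Set.Iio (m i))) l (𝓝 1) := by
  refine (tendsto_apply_atTop_of_monotone
    (F := fun i z ↦ (standardizedBinomial (n i) p : Measure ℝ).real (Set.Iio z))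
    (.of_forall fun i z w hzw ↦ measureReal_mono (Set.Iio_subset_Iio hzw))
    (.of_forall fun i z ↦ measureReal_le_one)
    (fun z ↦ (tendsto_standardizedBinomial_real_Iio hp0 hp1 z).comp hn)
    tendsto_stdNormalCDF_atTop hm).congr' ?_
  filter_upwards [hn.eventually_ne_atTop 0] with i hi
    using standardizedBinomial_real_Iio hp0 hp1 hi (m i)

end DeMoivreLaplace

section FairBinomial

/-- The parameter `1 / 2` of a fair coin, as a point of the unit interval. -/
noncomputable def oneHalf : unitInterval := ⟨1 / 2, by norm_num, by norm_num⟩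

lemma coe_oneHalf : (oneHalf : ℝ) = 1 / 2 := rfl

lemma oneHalf_pos : 0 < oneHalf :=
  unitInterval.coe_pos.1 (coe_oneHalf ▸ one_half_pos)

lemma oneHalf_lt_one : oneHalf < 1 :=
  unitInterval.coe_lt_one.1 (coe_oneHalf ▸ one_half_lt_one)

lemma binomial_oneHalf_real_Iio (n m : ℕ) :
    Bin(n, oneHalf).real (Set.Iio m) = (∑ i ∈ range m, (n.choose i : ℝ)) / 2 ^ n := by
  rw [binomial_real_Iio, sum_div, coe_oneHalf, sub_half]
  refine sum_congr rfl fun i _ ↦ ?_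
  obtain hi | hi := le_or_gt i n
  · rw [mul_assoc, ← pow_add, Nat.add_sub_cancel' hi, one_div, inv_pow, div_eq_mul_inv]
  · simp [Nat.choose_eq_zero_of_lt hi]

lemma sub_mul_oneHalf_div_sqrt (n m : ℕ) :
    (m - n * oneHalf : ℝ) / √(n * (oneHalf * (1 - oneHalf))) = (2 * m - n) / √n := by
  have hσ : √(n * (oneHalf * (1 - oneHalf)) : ℝ) = √n / 2 := by
    rw [coe_oneHalf, show (n * (1 / 2 * (1 - 1 / 2)) : ℝ) = n / 2 ^ 2 by ring,
      Real.sqrt_div (Nat.cast_nonneg n), Real.sqrt_sq zero_le_two]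
  rw [hσ, coe_oneHalf, div_div_eq_mul_div]
  ring

end FairBinomial

section CoverEfron

lemma Q_eq_div {d k N : ℕ} (hkN : k < N) :
    Q d k N = Bin(N - k - 1, oneHalf).real (Set.Iio (d - k)) /
      Bin(N - 1, oneHalf).real (Set.Iio d) := by
  have hpow : (2 : ℝ) ^ (N - 1) = 2 ^ k * 2 ^ (N - k - 1) := by
    rw [← pow_add]
    congr 1
    omega
  rw [Q, binomial_oneHalf_real_Iio, binomial_oneHalf_real_Iio, hpow]
  field_simp

variable {ι : Type*} {l : Filter ι}

lemma tendsto_sq_add_sub_one_atTop {s e : ι → ℝ} {y : ℝ} (hs : Tendsto s l atTop)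
    (he : Tendsto (fun i ↦ e i / s i) l (𝓝 y)) :
    Tendsto (fun i ↦ s i ^ 2 + e i - 1) l atTop := by
  refine (tendsto_atTop_add_const_right l (-1) (hs.atTop_mul_atTop₀ (hs.atTop_add he))).congr' ?_
  filter_upwards [hs.eventually_ne_atTop 0] with i hi
  field_simp
  ring

lemma tendsto_one_sub_div_sqrt {s e : ι → ℝ} {y : ℝ} (hs : Tendsto s l atTop)
    (he : Tendsto (fun i ↦ e i / s i) l (𝓝 y)) :
    Tendsto (fun i ↦ (1 - e i) / √(s i ^ 2 + e i - 1)) l (𝓝 (-y)) := by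
  have hinv : Tendsto (fun i ↦ (s i)⁻¹) l (𝓝 0) := hs.inv_tendsto_atTop
  have hratio : Tendsto (fun i ↦ 1 + e i / s i * (s i)⁻¹ - (s i)⁻¹ ^ 2) l (𝓝 1) := by
    simpa using (tendsto_const_nhds.add (he.mul hinv)).sub (hinv.pow 2)
  have hlim := (hinv.sub he).div hratio.sqrt (by simp)
  rw [zero_sub, Real.sqrt_one, div_one] at hlim
  refine hlim.congr' ?_
  filter_upwards [hs.eventually_gt_atTop 0] with i hi
  have hsq : s i ^ 2 + e i - 1 = s i ^ 2 * (1 + e i / s i * (s i)⁻¹ - (s i)⁻¹ ^ 2) := by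
    field_simp
  rw [Pi.div_apply, hsq, Real.sqrt_mul (sq_nonneg _), Real.sqrt_sq hi.le]
  field_simp

variable {d k N : ι → ℕ} {y : ℝ}

lemma exists_eventually_le_mul_sqrt
    (hy : Tendsto (fun i ↦ (N i - 2 * d i + k i : ℝ) / √(2 * (d i - k i))) l (𝓝 y))
    (hdk : Tendsto (fun i ↦ (d i - k i : ℝ)) l atTop) :
    ∃ K, ∀ᶠ i in l, (N i - 2 * d i + k i : ℝ) ≤ K * √(d i) := by
  refine ⟨(|y| + 1) * √2, ?_⟩
  filter_upwards [hy.eventually_le_const ((le_abs_self y).trans_lt (lt_add_one _)),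
    hdk.eventually_gt_atTop 0] with i hle hpos
  calc (N i - 2 * d i + k i : ℝ) ≤ (|y| + 1) * √(2 * (d i - k i)) :=
        (div_le_iff₀ (Real.sqrt_pos.2 (by positivity))).1 hle
    _ ≤ (|y| + 1) * √(2 * d i) := by gcongr; simp
    _ = (|y| + 1) * √2 * √(d i) := by rw [Real.sqrt_mul zero_le_two, mul_assoc]

lemma tendsto_two_mul_sub_div_sqrt_atTop {K : ℝ} (hN : ∀ᶠ i in l, 1 < N i)
    (hd : Tendsto (fun i ↦ (d i : ℝ)) l atTop)
    (hk : Tendsto (fun i ↦ k i / √(d i)) l atTop)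
    (hK : ∀ᶠ i in l, (N i - 2 * d i + k i : ℝ) ≤ K * √(d i)) :
    Tendsto (fun i ↦ (2 * d i - (N i - 1 : ℕ) : ℝ) / √(N i - 1 : ℕ)) l atTop := by
  have hlower : Tendsto (fun i ↦ (k i / √(d i) - K) / √3) l atTop :=
    (tendsto_atTop_add_const_right l (-K) hk).atTop_div_const (by positivity)
  refine tendsto_atTop_mono' l ?_ hlower
  filter_upwards [hN, hK, hd.eventually_gt_atTop 0, hk.eventually_ge_atTop K,
    (Real.tendsto_sqrt_atTop.comp hd).eventually_ge_atTop K] with i hN hK hd hk hdK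
  have hN3 : ((N i - 1 : ℕ) : ℝ) ≤ 3 * d i := by
    rw [Nat.cast_pred (by omega)]
    have : K * √(d i) ≤ d i :=
      (mul_le_mul_of_nonneg_right hdK (Real.sqrt_nonneg _)).trans_eq (Real.mul_self_sqrt hd.le)
    linarith [(k i).cast_nonneg (α := ℝ)]
  rw [le_div_iff₀ (Real.sqrt_pos.2 (by exact_mod_cast Nat.sub_pos_of_lt hN))]
  calc (k i / √(d i) - K) / √3 * √(N i - 1 : ℕ)
      ≤ (k i / √(d i) - K) / √3 * √(3 * d i) :=
        mul_le_mul_of_nonneg_left (Real.sqrt_le_sqrt hN3)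
          (div_nonneg (sub_nonneg.2 hk) (Real.sqrt_nonneg _))
    _ = k i - K * √(d i) := by
        have := Real.sqrt_pos.2 hd
        rw [Real.sqrt_mul zero_le_three]
        field_simp
    _ ≤ 2 * d i - (N i - 1 : ℕ) := by
        rw [Nat.cast_pred (by omega)]
        linarith

lemma tendsto_Q (hkN : ∀ᶠ i in l, k i < N i)
    (hn : Tendsto (fun i ↦ N i - k i - 1) l atTop)
    (hnum : Tendsto (fun i ↦ (2 * (d i - k i : ℕ) - (N i - k i - 1 : ℕ) : ℝ) /
      √(N i - k i - 1 : ℕ)) l (𝓝 y))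
    (hden : Tendsto (fun i ↦ (2 * d i - (N i - 1 : ℕ) : ℝ) / √(N i - 1 : ℕ)) l atTop) :
    Tendsto (fun i ↦ Q (d i) (k i) (N i)) l (𝓝 (stdNormalCDF y)) := by
  have hn' : Tendsto (fun i ↦ N i - 1) l atTop :=
    tendsto_atTop_mono (fun i ↦ by omega) hn
  have hnum' := tendsto_binomial_real_Iio oneHalf_pos oneHalf_lt_one hn
    (by simpa only [sub_mul_oneHalf_div_sqrt] using hnum)
  have hden' := tendsto_binomial_real_Iio_one oneHalf_pos oneHalf_lt_one hn'
    (by simpa only [sub_mul_oneHalf_div_sqrt] using hden)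
  refine ((hnum'.div hden' one_ne_zero).congr' ?_).trans_eq (by rw [div_one])
  filter_upwards [hkN] with i hi using (Q_eq_div hi).symm

theorem Q_critical_sqrt_general (hk : Tendsto (fun i ↦ k i / √(d i)) l atTop)
    (hdk : Tendsto (fun i ↦ (d i - k i : ℝ)) l atTop)
    (hy : Tendsto (fun i ↦ (N i - 2 * d i + k i : ℝ) / √(2 * (d i - k i))) l (𝓝 y)) :
    Tendsto (fun i ↦ Q (d i) (k i) (N i)) l (𝓝 (stdNormalCDF (-y))) ∧
      stdNormalCDF (-y) ∈ Set.Ioo (0 : ℝ) 1 := by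
  refine ⟨?_, stdNormalCDF_mem_Ioo _⟩
  have hs : Tendsto (fun i ↦ √(2 * (d i - k i) : ℝ)) l atTop :=
    Real.tendsto_sqrt_atTop.comp (hdk.const_mul_atTop zero_lt_two)
  have hd : Tendsto (fun i ↦ (d i : ℝ)) l atTop :=
    tendsto_atTop_mono (fun i ↦ sub_le_self _ (Nat.cast_nonneg _)) hdk
  have hkd : ∀ᶠ i in l, k i < d i :=
    (hdk.eventually_gt_atTop 0).mono fun i hi ↦ Nat.cast_lt.1 (sub_pos.1 hi)
  have hsq : ∀ᶠ i in l, √(2 * (d i - k i) : ℝ) ^ 2 + (N i - 2 * d i + k i) - 1 =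
      N i - k i - 1 := by
    filter_upwards [hkd] with i hi
    rw [Real.sq_sqrt (by simpa using hi.le)]
    ring
  have hn : Tendsto (fun i ↦ (N i - k i - 1 : ℝ)) l atTop :=
    (tendsto_sq_add_sub_one_atTop hs hy).congr' hsq
  have hkN : ∀ᶠ i in l, k i + 1 < N i := by
    filter_upwards [hn.eventually_gt_atTop 0] with i hi
    exact_mod_cast (by linarith : (k i + 1 : ℝ) < N i)
  have hcast : ∀ᶠ i in l, ((N i - k i - 1 : ℕ) : ℝ) = N i - k i - 1 := by
    filter_upwards [hkN] with i hi
    rw [Nat.cast_pred (by omega), Nat.cast_sub (by omega)]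
  obtain ⟨K, hK⟩ := exists_eventually_le_mul_sqrt hy hdk
  refine tendsto_Q (hkN.mono fun i hi ↦ by omega) ?_ ?_
    (tendsto_two_mul_sub_div_sqrt_atTop (hkN.mono fun i hi ↦ by omega) hd hk hK)
  · exact tendsto_natCast_atTop_iff.1 (hn.congr' (hcast.mono fun i hi ↦ hi.symm))
  · refine (tendsto_one_sub_div_sqrt hs hy).congr' ?_
    filter_upwards [hkd, hsq, hcast] with i hi hsq hcast
    rw [hsq, hcast, Nat.cast_sub hi.le]
    ring

end CoverEfron

section Regime

variable {ι : Type*} {l : Filter ι} {x a e : ι → ℝ} {ρ c : ℝ}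

lemma tendsto_sub_atTop_of_div (hx : Tendsto x l atTop)
    (ha : Tendsto (fun i ↦ a i / x i) l (𝓝 ρ)) (hρ : ρ < 1) :
    Tendsto (fun i ↦ x i - a i) l atTop := by
  refine (hx.atTop_mul_pos (sub_pos.2 hρ) (ha.const_sub 1)).congr' ?_
  filter_upwards [hx.eventually_ne_atTop 0] with i hi
  field_simp

lemma tendsto_div_sqrt_atTop_of_div (hx : Tendsto x l atTop)
    (ha : Tendsto (fun i ↦ a i / x i) l (𝓝 ρ)) (hρ : 0 < ρ) :
    Tendsto (fun i ↦ a i / √(x i)) l atTop := by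
  refine (ha.pos_mul_atTop hρ (Real.tendsto_sqrt_atTop.comp hx)).congr fun i ↦ ?_
  simp only [Function.comp_apply]
  rw [div_mul_eq_mul_div, mul_div_assoc, Real.sqrt_div_self', mul_one_div]

lemma tendsto_div_sqrt_two_mul_sub (hx : Tendsto x l atTop)
    (ha : Tendsto (fun i ↦ a i / x i) l (𝓝 ρ)) (hρ : ρ < 1)
    (he : Tendsto (fun i ↦ e i / √(x i)) l (𝓝 c)) :
    Tendsto (fun i ↦ e i / √(2 * (x i - a i))) l (𝓝 (c / √(2 * (1 - ρ)))) := by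
  have hvar : √(2 * (1 - ρ)) ≠ 0 := (Real.sqrt_pos.2 (by linarith)).ne'
  refine (he.div ((ha.const_sub 1).const_mul 2).sqrt hvar).congr' ?_
  filter_upwards [hx.eventually_gt_atTop 0] with i hi
  rw [Pi.div_apply, div_div, ← Real.sqrt_mul hi.le]
  congr 2
  field_simp

end Regime

lemma two_sub_one_div_mem_Ioo {δ : ℝ} (hδ : 1 / 2 < δ) (hδ1 : δ < 1) :
    2 - 1 / δ ∈ Set.Ioo (0 : ℝ) 1 := by
  have hδ0 : 0 < δ := one_half_pos.trans hδ
  have h2 : 1 / δ < 2 := (one_div_lt hδ0 two_pos).2 hδ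
  have h1 : 1 < 1 / δ := (one_lt_div hδ0).2 hδ1
  constructor <;> linarith

theorem Q_critical_sqrt (δ ρ c : ℝ) (hδ : 1 / 2 < δ) (hδ1 : δ < 1) (hρ : ρ = 2 - 1 / δ)
    (k N : ℕ → ℕ) (hkN : ∀ᶠ d in atTop, k d < d ∧ d < N d)
    (h1 : Tendsto (fun d : ℕ => (d : ℝ) / (N d : ℝ)) atTop (𝓝 δ))
    (h2 : Tendsto (fun d : ℕ => (k d : ℝ) / (d : ℝ)) atTop (𝓝 ρ))
    (h3 : Tendsto (fun d : ℕ => ((N d : ℝ) - 2 * d + k d) / Real.sqrt d) atTop (𝓝 c)) :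
    Tendsto (fun d : ℕ => Q d (k d) (N d)) atTop
        (𝓝 (stdNormalCDF (-c / Real.sqrt (2 * (1 - ρ))))) ∧
      stdNormalCDF (-c / Real.sqrt (2 * (1 - ρ))) ∈ Set.Ioo (0 : ℝ) 1 := by
  have hd : Tendsto (fun d : ℕ ↦ (d : ℝ)) atTop atTop := tendsto_natCast_atTop_atTop
  obtain ⟨hρ0, hρ1⟩ : ρ ∈ Set.Ioo (0 : ℝ) 1 := hρ ▸ two_sub_one_div_mem_Ioo hδ hδ1
  rw [neg_div]
  exact Q_critical_sqrt_general (tendsto_div_sqrt_atTop_of_div hd h2 hρ0)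
    (tendsto_sub_atTop_of_div hd h2 hρ1) (tendsto_div_sqrt_two_mul_sub hd h2 hρ1 h3)
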